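/- arXiv:1007.2207 — 2 statements merged into one kernel-verified Lean document; each statement's English description precedes it below -/
import Mathlib

section
/- Any metric space satisfying the four-point inequality has metric type 2 with constant 1: if (X,d) satisfies the four-point inequality, then for every n ≥ 1 and every function f from the discrete cube {−1,1}ⁿ to X, the sum over all ε in the cube of d(f(ε), f(−ε))² is at most the sum over all ε in the cube and all coordinates i of d(f(ε), f(ε^{[i]}))², where −ε negates every coordinate of ε and ε^{[i]} negates only the i-th coordinate of ε. -/
/-!
The four-point inequality forces roundness 2: the squared diagonals of a quadrilateral sum to at
most its squared sides. Indeed the sum of the diagonals is bounded by the sum of one pair of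
opposite sides, their difference is always bounded by the sum of the other pair, and
`2 (p² + q²) = (p + q)² + (p - q)²`.

Roundness `p` gives the cube inequality by Enflo's induction on the dimension. In the quadrilateral
`f(+,ε), f(-,ε), f(-,-ε), f(+,-ε)` the diagonals join antipodal points of the `(n+1)`-cube, two
sides are edges in the new direction, and the other two join antipodal points of the facets.
-/

section Cube

variable {n : ℕ}

lemma compl_finCons {α : Type*} [Compl α] (a : α) (v : Fin n → α) :
    (Fin.cons a v : Fin (n + 1) → α)ᶜ = Fin.cons aᶜ vᶜ := by
  ext i
  cases i using Fin.cases <;> rfl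

lemma sum_cube_succ {M : Type*} [AddCommMonoid M] (g : (Fin (n + 1) → Bool) → M) :
    ∑ ε, g ε = ∑ ε : Fin n → Bool, g (Fin.cons true ε) + ∑ ε, g (Fin.cons false ε) := by
  rw [← (Fin.consEquiv fun _ ↦ Bool).sum_comp g, Fintype.sum_prod_type, Fintype.sum_bool]
  rfl

end Cube

section Definitions

variable (X : Type*) [PseudoMetricSpace X]

/-- The four-point inequality (0-hyperbolicity): of the three ways to split four points into two
pairs, none has a total distance exceeding both of the others. -/
def FourPointInequality : Prop :=
  ∀ x₁ x₂ x₃ x₄ : X, dist x₁ x₂ + dist x₃ x₄ ≤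
    max (dist x₁ x₃ + dist x₂ x₄) (dist x₁ x₄ + dist x₂ x₃)

/-- Roundness `p` in the sense of Enflo, for the quadrilateral with consecutive vertices
`x, y, z, w`, whose diagonals are `xz` and `yw`. -/
def HasRoundness (p : ℝ) : Prop :=
  ∀ x y z w : X, dist x z ^ p + dist y w ^ p ≤
    dist x y ^ p + dist y z ^ p + dist z w ^ p + dist w x ^ p

variable {X} {n : ℕ}

/-- The sum of the `p`-th powers of the images of the diagonals of the cube `{-1, 1}ⁿ`, encoded as
`Fin n → Bool`, so that `-ε` is `εᶜ`. Each diagonal is counted once from either end. -/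
noncomputable def antipodalSum (p : ℝ) (f : (Fin n → Bool) → X) : ℝ :=
  ∑ ε, dist (f ε) (f εᶜ) ^ p

/-- The sum of the `p`-th powers of the images of the edges of the cube `{-1, 1}ⁿ`, encoded as
`Fin n → Bool`. Each edge is counted once from either end. -/
noncomputable def edgeSum (p : ℝ) (f : (Fin n → Bool) → X) : ℝ :=
  ∑ ε, ∑ i, dist (f ε) (f (Function.update ε i (!ε i))) ^ p

variable (X)

/-- Enflo type `p` with constant `K`; for `p = 2` this is the metric type 2 of Bourgain, Milman and
Wolfson. -/
def HasEnfloType (p K : ℝ) : Prop :=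
  ∀ (n : ℕ) (f : (Fin n → Bool) → X), antipodalSum p f ≤ K * edgeSum p f

end Definitions

section EnfloInduction

variable {X : Type*} [PseudoMetricSpace X] {n : ℕ} {p : ℝ}

lemma edgeSum_succ (p : ℝ) (f : (Fin (n + 1) → Bool) → X) :
    edgeSum p f =
      edgeSum p (fun ε ↦ f (Fin.cons true ε)) + edgeSum p (fun ε ↦ f (Fin.cons false ε)) +
        2 * ∑ ε : Fin n → Bool, dist (f (Fin.cons true ε)) (f (Fin.cons false ε)) ^ p := by
  simp only [edgeSum, sum_cube_succ, Fin.sum_univ_succ, Fin.cons_zero, Fin.cons_succ,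
    Fin.update_cons_zero, ← Fin.cons_update, Bool.not_true, Bool.not_false,
    Finset.sum_add_distrib, dist_comm (f (Fin.cons false _)) (f (Fin.cons true _))]
  ring

lemma HasRoundness.antipodalSum_succ_le (h : HasRoundness X p) (f : (Fin (n + 1) → Bool) → X) :
    antipodalSum p f ≤
      antipodalSum p (fun ε ↦ f (Fin.cons true ε)) + antipodalSum p (fun ε ↦ f (Fin.cons false ε)) +
        2 * ∑ ε : Fin n → Bool, dist (f (Fin.cons true ε)) (f (Fin.cons false ε)) ^ p := by
  let fPos (ε : Fin n → Bool) : X := f (Fin.cons true ε)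
  let fNeg (ε : Fin n → Bool) : X := f (Fin.cons false ε)
  have sum_new_edges_compl :
      ∑ ε, dist (fNeg εᶜ) (fPos εᶜ) ^ p = ∑ ε, dist (fPos ε) (fNeg ε) ^ p := by
    simp only [dist_comm (fNeg _)]
    exact compl_bijective.sum_comp fun ε ↦ dist (fPos ε) (fNeg ε) ^ p
  calc antipodalSum p f
      = ∑ ε, (dist (fPos ε) (fNeg εᶜ) ^ p + dist (fNeg ε) (fPos εᶜ) ^ p) := by
        simp only [antipodalSum, sum_cube_succ, compl_finCons, Finset.sum_add_distrib]
        rfl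
    _ ≤ ∑ ε, (dist (fPos ε) (fNeg ε) ^ p + dist (fNeg ε) (fNeg εᶜ) ^ p +
          dist (fNeg εᶜ) (fPos εᶜ) ^ p + dist (fPos εᶜ) (fPos ε) ^ p) :=
        Finset.sum_le_sum fun ε _ ↦ h (fPos ε) (fNeg ε) (fNeg εᶜ) (fPos εᶜ)
    _ = antipodalSum p fPos + antipodalSum p fNeg + 2 * ∑ ε, dist (fPos ε) (fNeg ε) ^ p := by
        simp only [Finset.sum_add_distrib, sum_new_edges_compl, antipodalSum,
          dist_comm (fPos _ᶜ) (fPos _)]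
        ring

theorem HasRoundness.hasEnfloType (h : HasRoundness X p) (hp : 0 < p) : HasEnfloType X p 1 := by
  intro n f
  rw [one_mul]
  induction n with
  | zero =>
    have compl_eq_self (ε : Fin 0 → Bool) : εᶜ = ε := Subsingleton.elim _ _
    simp [antipodalSum, edgeSum, compl_eq_self, Real.zero_rpow hp.ne']
  | succ n ih =>
    rw [edgeSum_succ]
    exact (h.antipodalSum_succ_le f).trans (by gcongr <;> exact ih _)

end EnfloInduction

section FourPoint

variable {X : Type*} [PseudoMetricSpace X]

lemma sq_add_sq_le_of_add_le_of_abs_sub_le {p q a b c d : ℝ} (hpq : 0 ≤ p + q)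
    (hadd : p + q ≤ a + c) (hsub : |p - q| ≤ b + d) :
    p ^ 2 + q ^ 2 ≤ a ^ 2 + b ^ 2 + c ^ 2 + d ^ 2 := by
  have hadd_sq : (p + q) ^ 2 ≤ 2 * (a ^ 2 + c ^ 2) :=
    (pow_le_pow_left₀ hpq hadd 2).trans add_sq_le
  have hsub_sq : (p - q) ^ 2 ≤ 2 * (b ^ 2 + d ^ 2) :=
    (sq_le_sq.2 (hsub.trans (le_abs_self _))).trans add_sq_le
  linarith [add_sq p q, sub_sq p q]

lemma dist_sq_add_dist_sq_le_of_dist_add_dist_le {x y z w : X}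
    (h : dist x z + dist y w ≤ dist x y + dist z w) :
    dist x z ^ 2 + dist y w ^ 2 ≤
      dist x y ^ 2 + dist y z ^ 2 + dist z w ^ 2 + dist w x ^ 2 := by
  have abs_diagonals_sub_le : |dist x z - dist y w| ≤ dist y z + dist w x := by
    simpa only [Real.dist_eq, dist_comm w y, dist_comm x w, dist_comm z y, add_comm] using
      dist_dist_dist_le x z w y
  exact sq_add_sq_le_of_add_le_of_abs_sub_le (by positivity) h abs_diagonals_sub_le

theorem FourPointInequality.hasRoundness_two (h : FourPointInequality X) : HasRoundness X 2 := by
  intro x y z w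
  simp only [Real.rpow_two]
  rcases le_max_iff.1 (h x z y w) with hle | hle
  · exact dist_sq_add_dist_sq_le_of_dist_add_dist_le hle
  · rw [dist_comm y w] at hle
    have hswap := dist_sq_add_dist_sq_le_of_dist_add_dist_le hle
    simp only [dist_comm w y, dist_comm x w, dist_comm w z, dist_comm z y, dist_comm y x] at hswap
    linarith

theorem four_point_metric_type_two_general (h : FourPointInequality X) : HasEnfloType X 2 1 :=
  h.hasRoundness_two.hasEnfloType two_pos

end FourPoint

/-- Any metric space satisfying the four-point inequality has metric
(BMW) type 2 with constant 1: for every `n ≥ 1` and every `f : {−1,1}ⁿ → X`,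
`Σ_ε d(f(ε), f(−ε))² ≤ Σ_ε Σ_i d(f(ε), f(ε^{[i]}))²`, where `−ε` negates every
coordinate and `ε^{[i]}` negates the `i`-th coordinate only. -/
theorem four_point_metric_type_two {X : Type*} [MetricSpace X]
    (hfour : ∀ x₁ x₂ x₃ x₄ : X, dist x₁ x₂ + dist x₃ x₄ ≤
      max (dist x₁ x₃ + dist x₂ x₄) (dist x₁ x₄ + dist x₂ x₃))
    (n : ℕ) (hn : 1 ≤ n) (f : (Fin n → Bool) → X) :
    ∑ ε : Fin n → Bool, dist (f ε) (f (fun i => !(ε i))) ^ 2 ≤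
      ∑ ε : Fin n → Bool, ∑ i : Fin n,
        dist (f ε) (f (Function.update ε i (!(ε i)))) ^ 2 := by
  simpa only [antipodalSum, edgeSum, Real.rpow_two, one_mul, Pi.compl_def, Bool.compl_eq_bnot]
    using four_point_metric_type_two_general hfour n f
end

section
/- Let X be a real normed space, A ⊆ X a nonempty bounded subset, and n ∈ ℕ. Then δ_n(A,X) ≥ δ_n^{(a)}(A,X) ≥ δ_{n+1}(conv(A ∪ (−A)), X), where conv(A ∪ (−A)) is the convex hull of A ∪ {−a : a ∈ A}. -/
/-- The `n`-th Kolmogorov diameter of `A ⊆ X`: the infimum over linear subspaces `M`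
of dimension at most `n` of `sup_{a ∈ A} dist(a, M)`. -/
noncomputable def kolmogorovDiam {X : Type*} [NormedAddCommGroup X] [NormedSpace ℝ X]
    (A : Set X) (n : ℕ) : ℝ :=
  sInf {r : ℝ | ∃ M : Submodule ℝ X, Module.rank ℝ M ≤ n ∧
    r = ⨆ a : A, Metric.infDist (a : X) (M : Set X)}

/-- The `n`-th affine Kolmogorov diameter of `A ⊆ X`: the infimum over nonempty affine
subspaces `M` of dimension at most `n` of `sup_{a ∈ A} dist(a, M)`. -/
noncomputable def affineKolmogorovDiam {X : Type*} [NormedAddCommGroup X]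
    [NormedSpace ℝ X] (A : Set X) (n : ℕ) : ℝ :=
  sInf {r : ℝ | ∃ M : AffineSubspace ℝ X, (M : Set X).Nonempty ∧
    Module.rank ℝ M.direction ≤ n ∧
    r = ⨆ a : A, Metric.infDist (a : X) (M : Set X)}

/-!
For an affine subspace `M`, the linear span `N` of `M` contains `M` and has at most one dimension
more. The function `x ↦ dist(x, N)` is the seminorm of `X ⧸ N` pulled back to `X`, so its
sublevel sets are convex and symmetric: a bound on `A` persists on `conv(A ∪ -A)`.
-/

open Metric Set

universe u

section Span

variable {K : Type*} {V : Type u} [Ring K] [AddCommGroup V] [Module K V]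

theorem span_coe_le_direction_sup_span_singleton {M : AffineSubspace K V} {p : V} (hp : p ∈ M) :
    Submodule.span K (M : Set V) ≤ M.direction ⊔ Submodule.span K {p} := by
  refine Submodule.span_le.2 fun x hx => Submodule.mem_sup.2 ?_
  exact ⟨x - p, M.vsub_mem_direction hx hp, p, Submodule.mem_span_singleton_self p,
    sub_add_cancel x p⟩

theorem rank_span_coe_le_rank_direction_add_one [StrongRankCondition K]
    [HasRankNullity.{u} K] (M : AffineSubspace K V) :
    Module.rank K (Submodule.span K (M : Set V)) ≤ Module.rank K M.direction + 1 := by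
  rcases (M : Set V).eq_empty_or_nonempty with hM | ⟨p, hp⟩
  · exact (rank_span_le _).trans (by simp [hM])
  calc Module.rank K (Submodule.span K (M : Set V))
      ≤ Module.rank K ↥(M.direction ⊔ Submodule.span K {p}) :=
        Submodule.rank_mono (span_coe_le_direction_sup_span_singleton hp)
    _ ≤ Module.rank K M.direction + Module.rank K (Submodule.span K {p}) :=
        Submodule.rank_add_le_rank_add_rank _ _
    _ ≤ Module.rank K M.direction + 1 := by
        gcongr
        exact (rank_span_le _).trans (Cardinal.mk_singleton p).le

end Span

section InfDist

theorem bddAbove_range_infDist {α : Type*} [PseudoMetricSpace α] {A : Set α}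
    (hA : Bornology.IsBounded A) (S : Set α) :
    BddAbove (range fun a : A => infDist (a : α) S) := by
  have himage : (infDist · S) '' A = range fun a : A => infDist (a : α) S := image_eq_range _ A
  exact himage ▸ ((lipschitz_infDist_pt S).isBounded_image hA).bddAbove

theorem iSup_infDist_nonneg {α : Type*} [PseudoMetricSpace α] (A S : Set α) :
    0 ≤ ⨆ a : A, infDist (a : α) S :=
  Real.iSup_nonneg fun _ => infDist_nonneg

theorem infDist_neg_addSubgroup {E : Type*} [SeminormedAddCommGroup E] (H : AddSubgroup E) (x : E) :
    infDist (-x) (H : Set E) = infDist x H := by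
  rw [← QuotientAddGroup.norm_mk, ← QuotientAddGroup.norm_mk, QuotientAddGroup.mk_neg, norm_neg]

variable {E : Type*} [SeminormedAddCommGroup E] [NormedSpace ℝ E]

theorem convex_setOf_infDist_submodule_le (N : Submodule ℝ E) (r : ℝ) :
    Convex ℝ {x | infDist x (N : Set E) ≤ r} := by
  have hball : {x | infDist x (N : Set E) ≤ r} = N.mkQ ⁻¹' closedBall 0 r := by
    have hnorm (x : E) : ‖N.mkQ x‖ = infDist x (N : Set E) :=
      QuotientAddGroup.norm_mk (S := N.toAddSubgroup) x
    ext x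
    rw [mem_ofPred_eq, mem_preimage, mem_closedBall_zero_iff, hnorm]
  exact hball ▸ (convex_closedBall 0 r).linear_preimage N.mkQ

theorem infDist_le_of_mem_convexHull_union_neg {A : Set E} {N : Submodule ℝ E} {r : ℝ}
    (hA : ∀ a ∈ A, infDist a (N : Set E) ≤ r) {x : E} (hx : x ∈ convexHull ℝ (A ∪ -A)) :
    infDist x (N : Set E) ≤ r := by
  refine convexHull_min (union_subset hA fun y hy => ?_) (convex_setOf_infDist_submodule_le N r) hx
  exact (infDist_neg_addSubgroup N.toAddSubgroup y).symm.trans_le (hA (-y) hy)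

theorem iSup_infDist_span_convexHull_union_neg_le {A S : Set E} (hA : Bornology.IsBounded A)
    (hS : S.Nonempty) :
    ⨆ x : convexHull ℝ (A ∪ -A), infDist (x : E) (Submodule.span ℝ S : Set E) ≤
      ⨆ a : A, infDist (a : E) S := by
  refine Real.iSup_le (fun x => ?_) (iSup_infDist_nonneg A S)
  refine infDist_le_of_mem_convexHull_union_neg (fun a ha => ?_) x.2
  calc infDist a (Submodule.span ℝ S : Set E)
      ≤ infDist a S := infDist_le_infDist_of_subset Submodule.subset_span hS
    _ ≤ ⨆ a : A, infDist (a : E) S := le_ciSup (bddAbove_range_infDist hA S) ⟨a, ha⟩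

end InfDist

section KolmogorovDiam

variable {X : Type*} [NormedAddCommGroup X] [NormedSpace ℝ X] {A : Set X} {n : ℕ}

theorem kolmogorovDiam_le_iSup_infDist (A : Set X) {M : Submodule ℝ X}
    (hM : Module.rank ℝ M ≤ n) :
    kolmogorovDiam A n ≤ ⨆ a : A, infDist (a : X) (M : Set X) := by
  refine csInf_le ⟨0, ?_⟩ ⟨M, hM, rfl⟩
  rintro _ ⟨L, -, rfl⟩
  exact iSup_infDist_nonneg A L

theorem le_kolmogorovDiam {r : ℝ}
    (h : ∀ M : Submodule ℝ X, Module.rank ℝ M ≤ n → r ≤ ⨆ a : A, infDist (a : X) (M : Set X)) :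
    r ≤ kolmogorovDiam A n := by
  refine le_csInf ⟨_, ⊥, by simp, rfl⟩ ?_
  rintro _ ⟨M, hM, rfl⟩
  exact h M hM

theorem affineKolmogorovDiam_le_iSup_infDist (A : Set X) {M : AffineSubspace ℝ X}
    (hne : (M : Set X).Nonempty) (hM : Module.rank ℝ M.direction ≤ n) :
    affineKolmogorovDiam A n ≤ ⨆ a : A, infDist (a : X) (M : Set X) := by
  refine csInf_le ⟨0, ?_⟩ ⟨M, hne, hM, rfl⟩
  rintro _ ⟨L, -, -, rfl⟩
  exact iSup_infDist_nonneg A L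

theorem le_affineKolmogorovDiam {r : ℝ}
    (h : ∀ M : AffineSubspace ℝ X, (M : Set X).Nonempty → Module.rank ℝ M.direction ≤ n →
      r ≤ ⨆ a : A, infDist (a : X) (M : Set X)) :
    r ≤ affineKolmogorovDiam A n := by
  refine le_csInf ⟨_, AffineSubspace.mk' 0 ⊥, AffineSubspace.mk'_nonempty 0 ⊥, ?_, rfl⟩ ?_
  · rw [AffineSubspace.direction_mk', rank_bot]
    exact zero_le
  rintro _ ⟨M, hne, hM, rfl⟩
  exact h M hne hM

theorem affineKolmogorovDiam_le_kolmogorovDiam (A : Set X) (n : ℕ) :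
    affineKolmogorovDiam A n ≤ kolmogorovDiam A n := by
  refine le_kolmogorovDiam fun M hM => ?_
  refine affineKolmogorovDiam_le_iSup_infDist A (M := M.toAffineSubspace) ⟨0, M.zero_mem⟩ ?_
  rwa [Submodule.toAffineSubspace_direction]

theorem kolmogorovDiam_convexHull_union_neg_le_affineKolmogorovDiam
    (hA : Bornology.IsBounded A) (n : ℕ) :
    kolmogorovDiam (convexHull ℝ (A ∪ -A)) (n + 1) ≤ affineKolmogorovDiam A n := by
  refine le_affineKolmogorovDiam fun M hne hM => ?_
  have hrank : Module.rank ℝ (Submodule.span ℝ (M : Set X)) ≤ (n + 1 : ℕ) := by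
    rw [Nat.cast_add_one]
    exact (rank_span_coe_le_rank_direction_add_one M).trans (by gcongr)
  exact (kolmogorovDiam_le_iSup_infDist _ hrank).trans
    (iSup_infDist_span_convexHull_union_neg_le hA hne)

end KolmogorovDiam

/-- For a nonempty bounded `A ⊆ X` and `n ∈ ℕ`:
`δ_n(A,X) ≥ δ_n^{(a)}(A,X) ≥ δ_{n+1}(conv(A ∪ (−A)), X)`. -/
theorem kolmogorov_diam_affine_chain {X : Type*} [NormedAddCommGroup X]
    [NormedSpace ℝ X] (A : Set X) (hA : A.Nonempty) (hAb : Bornology.IsBounded A)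
    (n : ℕ) :
    affineKolmogorovDiam A n ≤ kolmogorovDiam A n ∧
    kolmogorovDiam (convexHull ℝ (A ∪ -A)) (n + 1) ≤ affineKolmogorovDiam A n := by
  exact ⟨affineKolmogorovDiam_le_kolmogorovDiam A n,
    kolmogorovDiam_convexHull_union_neg_le_affineKolmogorovDiam hAb n⟩
end
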